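/- Let Ω ⊂ ℝ² be a bounded convex open set with C² boundary, let u ∈ Φ₀(Ω) ∩ C²(E_u) with u not identically zero, and let x ∈ Ω̄ be such that u(x) ∈ [0, max_{Ω̄} u). Then the anisotropic curvature k_H(x) of the level set {y ∈ Ω : u(y) = u(x)} at the point x satisfies k_H(x) = -H(∇u(x))⁻³ Σ_{i,j} S^{ij}(A[u](x)) F_{ξ_i}(∇u(x)) u_j(x), where S^{ij}(B) denotes the entries of the cofactor matrix of a 2×2 matrix B. -/

import Mathlib

open MeasureTheory Set
open scoped ENNReal NNReal RealInnerProductSpace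

noncomputable section

/-- The plane `ℝ²`. -/
abbrev E2 : Type := EuclideanSpace ℝ (Fin 2)

/-- The `i`-th partial derivative of `f` at `x`. -/
def pd (f : E2 → ℝ) (i : Fin 2) (x : E2) : ℝ :=
  fderiv ℝ f x (EuclideanSpace.single i 1)

/-- The Hessian matrix of `f` at `x`. -/
def hessian (f : E2 → ℝ) (x : E2) : Matrix (Fin 2) (Fin 2) ℝ :=
  Matrix.of fun i j => pd (pd f j) i x

/-- The hypotheses on the anisotropy `H`: a convex, coercive, positively `1`-homogeneous even
function, with `H²` strongly convex and `C²` away from the origin. -/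
structure IsAnisoNorm (H : E2 → ℝ) : Prop where
  nonneg : ∀ ξ, 0 ≤ H ξ
  convex : ConvexOn ℝ Set.univ H
  coercive : ∃ α > 0, ∀ ξ, α * ‖ξ‖ ≤ H ξ
  homog : ∀ (t : ℝ) (ξ : E2), H (t • ξ) = |t| * H ξ
  smooth : ContDiffOn ℝ 2 H {(0 : E2)}ᶜ
  posdef : ∀ ξ : E2, ξ ≠ 0 → ∀ v : E2, v ≠ 0 →
      0 < ∑ i, ∑ j, hessian (fun z => H z ^ 2) ξ i j * v i * v j

/-- The polar function `H^o(v) = sup_{ξ ≠ 0} (ξ·v)/H(ξ)`. -/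
def polar (H : E2 → ℝ) (v : E2) : ℝ :=
  ⨆ ξ : {ξ : E2 // ξ ≠ 0}, ⟪(ξ : E2), v⟫ / H ξ

/-- The Wulff shape `𝒲 = {H^o < 1}`. -/
def Wulff (H : E2 → ℝ) : Set E2 := {ξ | polar H ξ < 1}

/-- The scaled Wulff shape `𝒲_R = {H^o < R}`. -/
def wulffR (H : E2 → ℝ) (R : ℝ) : Set E2 := {ξ | polar H ξ < R}

/-- `κ`, the Lebesgue measure of the Wulff shape. -/
def kappa (H : E2 → ℝ) : ℝ := (volume (Wulff H)).toReal

/-- `F(ξ) = H(ξ)²/2`. -/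
def Fani (H : E2 → ℝ) (ξ : E2) : ℝ := H ξ ^ 2 / 2

/-- The matrix `A[u] = ∇²_ξ F(∇u) · ∇²u`. -/
def Amat (H u : E2 → ℝ) (x : E2) : Matrix (Fin 2) (Fin 2) ℝ :=
  hessian (Fani H) (gradient u x) * hessian u x

/-- The anisotropic Monge–Ampère operator `det_H[u] = det ∇²_ξF(∇u) · det ∇²u`. -/
def detH (H u : E2 → ℝ) (x : E2) : ℝ :=
  (hessian (Fani H) (gradient u x)).det * (hessian u x).det

/-- The cofactor matrix of a `2×2` matrix. -/
def cof (B : Matrix (Fin 2) (Fin 2) ℝ) : Matrix (Fin 2) (Fin 2) ℝ :=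
  Matrix.of ![![B 1 1, -B 1 0], ![-B 0 1, B 0 0]]

/-- The anisotropic curvature of the level line of `u` through `x`:
`k_H(x) = -Σ_{i,j} H_{ξ_iξ_j}(∇u) u_{ij}`. -/
def kH (H u : E2 → ℝ) (x : E2) : ℝ :=
  -∑ i, ∑ j, hessian H (gradient u x) i j * hessian u x i j

/-- The class `Φ₀(Ω)`: `W^{2,2}(Ω) ∩ C¹(Ω̄)` functions vanishing on `∂Ω`, concave in `Ω`. -/
structure MemPhi0 (Ω : Set E2) (u : E2 → ℝ) : Prop where
  sobolev : ∀ i j, MemLp (fun x => hessian u x i j) 2 (volume.restrict Ω)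
  c1 : ContDiffOn ℝ 1 u (closure Ω)
  bzero : ∀ x ∈ frontier Ω, u x = 0
  concave : ConcaveOn ℝ Ω u

/-- `max_{Ω̄} u`. -/
def maxcl (Ω : Set E2) (u : E2 → ℝ) : ℝ := sSup (u '' closure Ω)

/-- The set `E_u = {x ∈ Ω : 0 ≤ u(x) < max_{Ω̄} u}`. -/
def Eu (Ω : Set E2) (u : E2 → ℝ) : Set E2 :=
  {x ∈ Ω | 0 ≤ u x ∧ u x < maxcl Ω u}

/-- `K` has `C²` boundary: it admits a global `C²` defining function with nonvanishing
gradient on the boundary. -/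
def HasC2Boundary (K : Set E2) : Prop :=
  ∃ φ : E2 → ℝ, ContDiff ℝ 2 φ ∧ K = {x | φ x < 0} ∧
    frontier K = {x | φ x = 0} ∧ ∀ x ∈ frontier K, gradient φ x ≠ 0

/-- `K` has `C¹` boundary. -/
def HasC1Boundary (K : Set E2) : Prop :=
  ∃ φ : E2 → ℝ, ContDiff ℝ 1 φ ∧ K = {x | φ x < 0} ∧
    frontier K = {x | φ x = 0} ∧ ∀ x ∈ frontier K, gradient φ x ≠ 0

/-- The Euclidean outer unit normal `ν = -∇u/|∇u|` to a superlevel set of `u`. -/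
def nuLevel (u : E2 → ℝ) (x : E2) : E2 := -(‖gradient u x‖⁻¹ • gradient u x)

/-- The level set `Σ_t = {u = t}` (in `Ω̄`). -/
def levelSet (Ω : Set E2) (u : E2 → ℝ) (t : ℝ) : Set E2 :=
  {x ∈ closure Ω | u x = t}

/-- The superlevel set `Ω_t = {u > t}`. -/
def superLevel (Ω : Set E2) (u : E2 → ℝ) (t : ℝ) : Set E2 :=
  {x ∈ Ω | t < u x}

/-- `λ_H(t) = P_H({u > t}) = ∫_{{u = t}} H(ν) dℋ¹`. -/
def lambdaH (H : E2 → ℝ) (Ω : Set E2) (u : E2 → ℝ) (t : ℝ) : ℝ :=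
  ∫ x in levelSet Ω u t, H (nuLevel u x) ∂(μH[1] : Measure E2)

/-- The anisotropic perimeter `P_H(Ω) = λ_H(0)` of `Ω = {u > 0}`. -/
def PerH (H : E2 → ℝ) (Ω : Set E2) (u : E2 → ℝ) : ℝ := lambdaH H Ω u 0

/-- The rearrangement `u^♦(s) = sup{t ≥ 0 : λ_H(t) ≥ s}` of `u` with respect to the
anisotropic perimeter. -/
def diamondRe (H : E2 → ℝ) (Ω : Set E2) (u : E2 → ℝ) (s : ℝ) : ℝ :=
  sSup {t : ℝ | 0 ≤ t ∧ s ≤ lambdaH H Ω u t}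

/-- The anisotropic radial symmetrand `u^★(x) = u^♦(2κ H^o(x))`. -/
def starRe (H : E2 → ℝ) (Ω : Set E2) (u : E2 → ℝ) (x : E2) : ℝ :=
  diamondRe H Ω u (2 * kappa H * polar H x)

/-- `Ω^★ = 𝒲_R` with `R = P_H(Ω)/(2κ)`. -/
def OmegaStar (H : E2 → ℝ) (Ω : Set E2) (u : E2 → ℝ) : Set E2 :=
  wulffR H (PerH H Ω u / (2 * kappa H))

/-- The distribution function `μ(t) = |{x ∈ Ω : |f(x)| > t}|`. -/
def distrib (Ω : Set E2) (f : E2 → ℝ) (t : ℝ) : ℝ :=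
  (volume {x ∈ Ω | t < |f x|}).toReal

/-- The decreasing rearrangement `f*(s) = sup{t : μ(t) > s}`. -/
def decRe (Ω : Set E2) (f : E2 → ℝ) (s : ℝ) : ℝ :=
  sSup {t : ℝ | s < distrib Ω f t}

lemma IsAnisoNorm.cda {H : E2 → ℝ} (hH : IsAnisoNorm H) {ξ : E2} (h : ξ ≠ 0) :
    ContDiffAt ℝ 2 H ξ :=
  hH.smooth.contDiffAt (isOpen_compl_singleton.mem_nhds h)

lemma IsAnisoNorm.diff {H : E2 → ℝ} (hH : IsAnisoNorm H) {ξ : E2} (h : ξ ≠ 0) :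
    DifferentiableAt ℝ H ξ := (hH.cda h).differentiableAt (by norm_num)

lemma IsAnisoNorm.pos {H : E2 → ℝ} (hH : IsAnisoNorm H) {ξ : E2} (h : ξ ≠ 0) : 0 < H ξ := by
  obtain ⟨α, hα, hc⟩ := hH.coercive
  exact lt_of_lt_of_le (mul_pos hα (norm_pos_iff.2 h)) (hc ξ)

lemma IsAnisoNorm.euler {H : E2 → ℝ} (hH : IsAnisoNorm H) {ξ : E2} (h : ξ ≠ 0) :
    fderiv ℝ H ξ ξ = H ξ := by
  have hg : HasDerivAt (fun t : ℝ => t • ξ) ξ 1 := by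
    simpa using (hasDerivAt_id (1 : ℝ)).smul_const ξ
  have h1 : HasDerivAt (fun t : ℝ => H (t • ξ)) (fderiv ℝ H ξ ξ) 1 := by
    have h0 : HasFDerivAt H (fderiv ℝ H ξ) ((1 : ℝ) • ξ) := by
      simpa using (hH.diff h).hasFDerivAt
    exact h0.comp_hasDerivAt (1 : ℝ) hg
  have h2 : HasDerivAt (fun t : ℝ => H (t • ξ)) (H ξ) 1 := by
    have h3 : HasDerivAt (fun t : ℝ => t * H ξ) (H ξ) 1 := by
      simpa using (hasDerivAt_id (1 : ℝ)).mul_const (H ξ)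
    refine h3.congr_of_eventuallyEq ?_
    filter_upwards [lt_mem_nhds (show (0 : ℝ) < 1 by norm_num)] with t ht
    rw [hH.homog, abs_of_pos ht]
  exact h1.unique h2

lemma e2_decomp (ξ : E2) :
    ξ = ξ 0 • EuclideanSpace.single (0 : Fin 2) (1 : ℝ)
      + ξ 1 • EuclideanSpace.single (1 : Fin 2) (1 : ℝ) := by
  ext i; fin_cases i <;> simp

lemma fderiv_eq_pd (f : E2 → ℝ) (x ξ : E2) :
    fderiv ℝ f x ξ = pd f 0 x * ξ 0 + pd f 1 x * ξ 1 := by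
  conv_lhs => rw [e2_decomp ξ]
  simp [pd, mul_comm]

lemma gradient_apply_pd (u : E2 → ℝ) (x : E2) (j : Fin 2) : gradient u x j = pd u j x := by
  have h : inner ℝ (gradient u x) (EuclideanSpace.single j (1 : ℝ))
      = fderiv ℝ u x (EuclideanSpace.single j 1) := by
    rw [gradient, InnerProductSpace.toDual_symm_apply]
  rw [pd, ← h, EuclideanSpace.inner_single_right]
  simp

lemma IsAnisoNorm.pd_diff {H : E2 → ℝ} (hH : IsAnisoNorm H) {ξ : E2} (h : ξ ≠ 0) (j : Fin 2) :
    DifferentiableAt ℝ (pd H j) ξ := by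
  have h1 : DifferentiableAt ℝ (fderiv ℝ H) ξ :=
    ((hH.cda h).fderiv_right (m := 1) (by norm_num)).differentiableAt (by norm_num)
  exact h1.clm_apply (differentiableAt_const _)

lemma IsAnisoNorm.hess_symm {H : E2 → ℝ} (hH : IsAnisoNorm H) {ξ : E2} (h : ξ ≠ 0)
    (i j : Fin 2) : hessian H ξ i j = hessian H ξ j i := by
  have h1 : DifferentiableAt ℝ (fderiv ℝ H) ξ :=
    ((hH.cda h).fderiv_right (m := 1) (by norm_num)).differentiableAt (by norm_num)
  have key : ∀ a b : Fin 2, hessian H ξ a b = fderiv ℝ (fderiv ℝ H) ξ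
      (EuclideanSpace.single a 1) (EuclideanSpace.single b 1) := by
    intro a b
    change fderiv ℝ (fun z => fderiv ℝ H z (EuclideanSpace.single b 1)) ξ _ = _
    rw [fderiv_clm_apply h1 (differentiableAt_const _)]
    simp
  rw [key, key]
  exact ((hH.cda h).isSymmSndFDerivAt (by simp)) _ _

lemma IsAnisoNorm.euler2 {H : E2 → ℝ} (hH : IsAnisoNorm H) {ξ : E2} (h : ξ ≠ 0) (k : Fin 2) :
    hessian H ξ k 0 * ξ 0 + hessian H ξ k 1 * ξ 1 = 0 := by
  have hev : (fun z : E2 => pd H 0 z * z 0 + pd H 1 z * z 1) =ᶠ[nhds ξ] H := by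
    filter_upwards [isOpen_compl_singleton.mem_nhds h] with z hz
    rw [← fderiv_eq_pd, hH.euler hz]
  have hp : ∀ j : Fin 2, HasFDerivAt (fun z : E2 => z j)
      (EuclideanSpace.proj j : E2 →L[ℝ] ℝ) ξ := fun j =>
    (EuclideanSpace.proj j : E2 →L[ℝ] ℝ).hasFDerivAt
  have h1 := (((hH.pd_diff h 0).hasFDerivAt.mul (hp 0)).add
    ((hH.pd_diff h 1).hasFDerivAt.mul (hp 1)))
  have h2 := (h1.congr_of_eventuallyEq hev.symm).unique (hH.diff h).hasFDerivAt
  have h3 := congrArg (fun L : E2 →L[ℝ] ℝ => L (EuclideanSpace.single k 1)) h2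
  simp only [hessian, Matrix.of_apply]
  have e : ∀ j, pd (pd H j) k ξ = fderiv ℝ (pd H j) ξ (EuclideanSpace.single k 1) := fun _ => rfl
  have e' : pd H k ξ = fderiv ℝ H ξ (EuclideanSpace.single k 1) := rfl
  simp only [← e', ← e, ContinuousLinearMap.add_apply, ContinuousLinearMap.smul_apply,
    smul_eq_mul] at h3
  fin_cases k <;> simp at h3 ⊢ <;> linarith

lemma IsAnisoNorm.pd_F {H : E2 → ℝ} (hH : IsAnisoNorm H) {ξ : E2} (h : ξ ≠ 0) (j : Fin 2) :
    pd (Fani H) j ξ = H ξ * pd H j ξ := by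
  have h1 : HasFDerivAt (Fani H) (H ξ • fderiv ℝ H ξ) ξ := by
    have h2 := ((hH.diff h).hasFDerivAt.pow 2).mul_const (1 / 2 : ℝ)
    refine (h2.congr_fderiv ?_).congr_of_eventuallyEq ?_
    · ext v; simp; ring
    · exact Filter.Eventually.of_forall fun z => by simp [Fani]; ring
  simp [pd, h1.fderiv]

lemma IsAnisoNorm.hess_F {H : E2 → ℝ} (hH : IsAnisoNorm H) {ξ : E2} (h : ξ ≠ 0) (i j : Fin 2) :
    hessian (Fani H) ξ i j = pd H i ξ * pd H j ξ + H ξ * hessian H ξ i j := by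
  have hev : pd (Fani H) j =ᶠ[nhds ξ] fun z => H z * pd H j z := by
    filter_upwards [isOpen_compl_singleton.mem_nhds h] with z hz
    exact hH.pd_F hz j
  have h1 := ((hH.diff h).hasFDerivAt.mul (hH.pd_diff h j).hasFDerivAt).congr_of_eventuallyEq hev
  have e : hessian (Fani H) ξ i j = fderiv ℝ (pd (Fani H) j) ξ (EuclideanSpace.single i 1) := rfl
  have e1 : hessian H ξ i j = fderiv ℝ (pd H j) ξ (EuclideanSpace.single i 1) := rfl
  have e2 : pd H i ξ = fderiv ℝ H ξ (EuclideanSpace.single i 1) := rfl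
  rw [e, h1.fderiv, e1, e2]
  simp; ring

lemma IsAnisoNorm.hess_zero {H : E2 → ℝ} (hH : IsAnisoNorm H) (i j : Fin 2) :
    hessian H 0 i j = 0 := by
  have hnd : ¬ DifferentiableAt ℝ (pd H j) 0 := by
    intro hd
    set e : E2 := EuclideanSpace.single j 1 with he
    have hene : e ≠ 0 := by simp [he]
    have hval : ∀ t : ℝ, t ≠ 0 → t * pd H j (t • e) = |t| * H e := by
      intro t ht
      have := hH.euler (smul_ne_zero ht hene)
      rw [map_smul, hH.homog] at this
      exact this
    have hc : ContinuousAt (fun t : ℝ => pd H j (t • e)) 0 := by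
      have h0 : ContinuousAt (pd H j) ((0 : ℝ) • e) := by simpa using hd.continuousAt
      exact ContinuousAt.comp (f := fun t : ℝ => t • e) (g := pd H j) h0 (by fun_prop)
    have hr : Filter.Tendsto (fun t : ℝ => pd H j (t • e)) (nhdsWithin 0 (Set.Ioi 0))
        (nhds (H e)) := by
      refine tendsto_const_nhds.congr' ?_
      filter_upwards [self_mem_nhdsWithin] with t ht
      have ht : 0 < t := ht
      have := hval t ht.ne'
      rw [abs_of_pos ht] at this
      exact (mul_left_cancel₀ ht.ne' this).symm
    have hl : Filter.Tendsto (fun t : ℝ => pd H j (t • e)) (nhdsWithin 0 (Set.Iio 0))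
        (nhds (-H e)) := by
      refine tendsto_const_nhds.congr' ?_
      filter_upwards [self_mem_nhdsWithin] with t ht
      have ht : t < 0 := ht
      have := hval t ht.ne
      rw [abs_of_neg ht] at this
      refine (mul_left_cancel₀ ht.ne ?_).symm
      rw [this]; ring
    have h1 := tendsto_nhds_unique (hc.mono_left nhdsWithin_le_nhds) hr
    have h2 := tendsto_nhds_unique (hc.mono_left nhdsWithin_le_nhds) hl
    have := hH.pos hene
    linarith
  simp [hessian, pd, fderiv_zero_of_not_differentiableAt hnd]

lemma hess_alg (a b d p q x y h U V W Z : ℝ) (hh : 0 < h) (hxy : 0 < x ^ 2 + y ^ 2)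
    (h1 : a * x + b * y = 0) (h2 : b * x + d * y = 0) (h3 : p * x + q * y = h) :
    a * U + b * V + (b * W + d * Z) = (h ^ 3)⁻¹ *
      (((p * q + h * b) * V + (q * q + h * d) * Z) * (h * p) * x
        - ((p * q + h * b) * U + (q * q + h * d) * W) * (h * p) * y
        + (-((p * p + h * a) * V + (p * q + h * b) * Z) * (h * q) * x
        + ((p * p + h * a) * U + (p * q + h * b) * W) * (h * q) * y)) := by
  obtain ⟨c, rfl, rfl, rfl⟩ : ∃ c, a = c * y ^ 2 ∧ b = -c * (x * y) ∧ d = c * x ^ 2 := by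
    refine ⟨(a + d) / (x ^ 2 + y ^ 2), ?_, ?_, ?_⟩ <;> field_simp
    · linear_combination x * h1 - y * h2
    · linear_combination y * h1 + x * h2
    · linear_combination y * h2 - x * h1
  subst h3
  have hne := hh.ne'
  rw [eq_comm, inv_mul_eq_iff_eq_mul₀ (pow_ne_zero 3 hne)]
  ring

/-- for `u ∈ Φ₀(Ω) ∩ C²(E_u)`, `u ≢ 0`, and `x ∈ Ω̄` with
`0 ≤ u(x) < max_{Ω̄} u`, the anisotropic curvature of the level line of `u` through `x`
satisfies `k_H(x) = -H(∇u(x))⁻³ Σ_{i,j} S^{ij}(A[u](x)) F_{ξ_i}(∇u(x)) u_j(x)`. -/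
theorem aniso_curvature_formula
    (H : E2 → ℝ) (hH : IsAnisoNorm H)
    (Ω : Set E2) (hΩo : IsOpen Ω) (hΩb : Bornology.IsBounded Ω) (hΩc : Convex ℝ Ω)
    (hΩbd : HasC2Boundary Ω)
    (u : E2 → ℝ) (hu : MemPhi0 Ω u) (hu2 : ContDiffOn ℝ 2 u (Eu Ω u))
    (hune : ∃ x ∈ Ω, u x ≠ 0)
    (x : E2) (hx : x ∈ closure Ω) (hx0 : 0 ≤ u x) (hxM : u x < maxcl Ω u) :
    kH H u x
      = -(H (gradient u x) ^ 3)⁻¹ *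
          ∑ i, ∑ j, cof (Amat H u x) i j * pd (Fani H) i (gradient u x) * pd u j x := by
  by_cases hg : gradient u x = 0
  · have hH0 : H 0 = 0 := by simpa using hH.homog 0 0
    simp [kH, hg, hH.hess_zero, hH0]
  · set ξ := gradient u x with hξ
    have hxy : 0 < ξ 0 ^ 2 + ξ 1 ^ 2 := by
      have := norm_pos_iff.2 hg
      have h2 := EuclideanSpace.real_norm_sq_eq ξ
      rw [Fin.sum_univ_two] at h2
      rw [← h2]; positivity
    have h3 : pd H 0 ξ * ξ 0 + pd H 1 ξ * ξ 1 = H ξ := by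
      rw [← fderiv_eq_pd, hH.euler hg]
    have h1 := hH.euler2 hg 0
    have h2 := hH.euler2 hg 1
    rw [hH.hess_symm hg 1 0] at h2
    have key := hess_alg _ _ _ _ _ _ _ _ (hessian u x 0 0) (hessian u x 0 1)
      (hessian u x 1 0) (hessian u x 1 1) (hH.pos hg) hxy h1 h2 h3
    have hu0 : pd u 0 x = ξ 0 := (gradient_apply_pd u x 0).symm
    have hu1 : pd u 1 x = ξ 1 := (gradient_apply_pd u x 1).symm
    simp only [kH, Fin.sum_univ_two, cof, Amat, ← hξ, Matrix.of_apply, Matrix.mul_apply,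
      hH.pd_F hg, hH.hess_F hg, hu0, hu1, hH.hess_symm hg 1 0, Matrix.cons_val_zero,
      Matrix.cons_val_one]
    rw [key]
    ring
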